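/- Let p ≥ 5 and let B_{2p+2} be the braid group with Artin generators σ_1,…,σ_{2p+1}. Set ρ_3 = σ_3σ_2σ_4σ_3σ_1 and ρ_{2i+1} = σ_{2i+1}σ_{2i}σ_{2i+2}σ_{2i+1} for i ≥ 2. Then the product (ρ_3ρ_5⋯ρ_{2p−7})(ρ_3ρ_5⋯ρ_{2p−9})⋯(ρ_3ρ_5)(ρ_3), i.e. the product over t = p−4, p−5, …, 1 (in this order) of the blocks ρ_3ρ_5⋯ρ_{2t+1}, equals σ_1^{−1}·(∏_{i=4}^{p−1} (σ_3σ_4⋯σ_{2(p−i)+2})(σ_1σ_2⋯σ_{2(p−i)+1}))·σ_1, where the product over i is taken in increasing order of i. -/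

import Mathlib

/-- The Artin braid relations on `m` generators (generator `i : Fin m`
    represents the Artin generator `σ_{i+1}`). -/
def braidRels (m : ℕ) : Set (FreeGroup (Fin m)) :=
  {r | (∃ i j : Fin m, (i : ℕ) + 2 ≤ (j : ℕ) ∧
        r = FreeGroup.of i * FreeGroup.of j * (FreeGroup.of i)⁻¹ * (FreeGroup.of j)⁻¹) ∨
      (∃ i j : Fin m, (j : ℕ) = (i : ℕ) + 1 ∧
        r = FreeGroup.of i * FreeGroup.of j * FreeGroup.of i *
            (FreeGroup.of j * FreeGroup.of i * FreeGroup.of j)⁻¹)}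

/-- The braid group on `n` strands, presented by the Artin generators
    `σ_1, …, σ_{n-1}` and the braid relations. -/
def BraidGroup (n : ℕ) : Type := PresentedGroup (braidRels (n - 1))

instance (n : ℕ) : Group (BraidGroup n) :=
  inferInstanceAs (Group (PresentedGroup (braidRels (n - 1))))

/-- The Artin generator `σ_i` of `BraidGroup n` (1-based: `1 ≤ i ≤ n-1`);
    out-of-range indices give the identity. -/
def σ (n i : ℕ) : BraidGroup n :=
  if h : 1 ≤ i ∧ i ≤ n - 1 then
    (PresentedGroup.of ⟨i - 1, by omega⟩ : PresentedGroup (braidRels (n - 1)))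
  else 1

/-- The add-tail minimal conjugator `ρ_{2i+1}` in `B_n`:
`ρ_3 = σ_3σ_2σ_4σ_3σ_1` (the case `i = 1`) and
`ρ_{2i+1} = σ_{2i+1}σ_{2i}σ_{2i+2}σ_{2i+1}` for `i ≥ 2`. -/
def ρ (n i : ℕ) : BraidGroup n :=
  if i = 1 then σ n 3 * σ n 2 * σ n 4 * σ n 3 * σ n 1
  else σ n (2 * i + 1) * σ n (2 * i) * σ n (2 * i + 2) * σ n (2 * i + 1)

/-- The ascending product of generators `σ_a σ_{a+1} ⋯ σ_b` in `B_n`. -/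
def asc (n a b : ℕ) : BraidGroup n :=
  ((List.range (b + 1 - a)).map (fun t => σ n (a + t))).prod

/-- The block `ρ_3 ρ_5 ⋯ ρ_{2t+1}` in `B_n`. -/
def rhoBlock (n t : ℕ) : BraidGroup n :=
  ((List.range t).map (fun s => ρ n (s + 1))).prod

theorem sig_comm (n i j : ℕ) (h : i + 2 ≤ j) : σ n i * σ n j = σ n j * σ n i := by
  by_cases hi : 1 ≤ i ∧ i ≤ n - 1
  · by_cases hj : 1 ≤ j ∧ j ≤ n - 1
    · have ei : σ n i = (PresentedGroup.of ⟨i - 1, by omega⟩ :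
          PresentedGroup (braidRels (n - 1))) := dif_pos hi
      have ej : σ n j = (PresentedGroup.of ⟨j - 1, by omega⟩ :
          PresentedGroup (braidRels (n - 1))) := dif_pos hj
      have hr : (FreeGroup.of (⟨i - 1, by omega⟩ : Fin (n - 1)) *
          FreeGroup.of (⟨j - 1, by omega⟩ : Fin (n - 1)) *
          (FreeGroup.of (⟨i - 1, by omega⟩ : Fin (n - 1)))⁻¹ *
          (FreeGroup.of (⟨j - 1, by omega⟩ : Fin (n - 1)))⁻¹) ∈ braidRels (n - 1) :=
        Or.inl ⟨⟨i - 1, by omega⟩, ⟨j - 1, by omega⟩, by simp only; omega, rfl⟩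
      have h1 := PresentedGroup.one_of_mem hr
      rw [map_mul, map_mul, map_mul, map_inv, map_inv, mul_inv_eq_one, mul_inv_eq_iff_eq_mul] at h1
      rw [ei, ej]
      exact h1
    · have ej : σ n j = 1 := dif_neg hj
      rw [ej, mul_one, one_mul]
  · have ei : σ n i = 1 := dif_neg hi
    rw [ei, mul_one, one_mul]

theorem asc_succ (n a b : ℕ) (h : a ≤ b + 1) : asc n a (b + 1) = asc n a b * σ n (b + 1) := by
  unfold asc
  have e : b + 1 + 1 - a = (b + 1 - a) + 1 := by omega
  have e2 : a + (b + 1 - a) = b + 1 := by omega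
  rw [e, List.range_succ, List.map_append, List.prod_append]
  simp [e2]

theorem asc_comm (n a b j : ℕ) (h : b + 2 ≤ j) : asc n a b * σ n j = σ n j * asc n a b := by
  unfold asc
  refine Commute.list_prod_left _ _ ?_
  intro x hx
  simp only [List.mem_map, List.mem_range] at hx
  obtain ⟨t, ht, rfl⟩ := hx
  exact sig_comm n _ _ (by omega)

theorem key (n k : ℕ) : asc n 3 (2 * (k + 1) + 2) * asc n 1 (2 * (k + 1) + 1) * σ n 1 =
    σ n 1 * rhoBlock n (k + 1) := by
  induction k with
  | zero =>
    have e1 := sig_comm n 1 3 (by omega)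
    have e2 := sig_comm n 1 4 (by omega)
    have e3 := sig_comm n 2 4 (by omega)
    have l1 : asc n 3 (2 * (0 + 1) + 2) = σ n 3 * σ n 4 := by
      simp [asc, List.range_succ]
    have l2 : asc n 1 (2 * (0 + 1) + 1) = σ n 1 * σ n 2 * σ n 3 := by
      simp [asc, List.range_succ, mul_assoc]
    have l3 : rhoBlock n (0 + 1) = σ n 3 * σ n 2 * σ n 4 * σ n 3 * σ n 1 := by
      simp [rhoBlock, ρ]
    rw [l1, l2, l3]
    calc _ = σ n 3 * (σ n 4 * σ n 1) * σ n 2 * σ n 3 * σ n 1 := by simp only [mul_assoc]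
      _ = (σ n 3 * σ n 1) * (σ n 4 * σ n 2) * σ n 3 * σ n 1 := by
        rw [← e2]; simp only [mul_assoc]
      _ = _ := by rw [← e1, ← e3]; simp only [mul_assoc]
  | succ k ih =>
    have l3 : rhoBlock n (k + 1 + 1) = rhoBlock n (k + 1) * ρ n (k + 2) := by
      unfold rhoBlock
      rw [List.range_succ (n := k + 1), List.map_append, List.prod_append]
      simp
    have hr : ρ n (k + 2) = σ n (2 * k + 5) * σ n (2 * k + 4) * σ n (2 * k + 6) *
        σ n (2 * k + 5) := by
      unfold ρ
      rw [if_neg (by omega)]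
      rfl
    have c1 := fun j (hj : 3 ≤ j) => sig_comm n 1 j (by omega)
    have hc : σ n 1 * ρ n (k + 2) = ρ n (k + 2) * σ n 1 := by
      rw [hr]
      have k4 : Commute (σ n 1) (σ n (2 * k + 4)) := c1 _ (by omega)
      have k5 : Commute (σ n 1) (σ n (2 * k + 5)) := c1 _ (by omega)
      have k6 : Commute (σ n 1) (σ n (2 * k + 6)) := c1 _ (by omega)
      exact ((k5.mul_right k4).mul_right k6).mul_right k5
    have a1 : asc n 3 (2 * (k + 1 + 1) + 2) =
        asc n 3 (2 * (k + 1) + 2) * σ n (2 * k + 5) * σ n (2 * k + 6) := by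
      rw [show 2 * (k + 1 + 1) + 2 = 2 * (k + 1) + 2 + 1 + 1 by ring, asc_succ _ _ _ (by omega),
        asc_succ _ _ _ (by omega)]
      rfl
    have a2 : asc n 1 (2 * (k + 1 + 1) + 1) =
        asc n 1 (2 * (k + 1) + 1) * σ n (2 * k + 4) * σ n (2 * k + 5) := by
      rw [show 2 * (k + 1 + 1) + 1 = 2 * (k + 1) + 1 + 1 + 1 by ring, asc_succ _ _ _ (by omega),
        asc_succ _ _ _ (by omega)]
      rfl
    have d1 := asc_comm n 1 (2 * (k + 1) + 1) (2 * k + 5) (by omega)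
    have d2 := asc_comm n 1 (2 * (k + 1) + 1) (2 * k + 6) (by omega)
    have d3 := sig_comm n (2 * k + 4) (2 * k + 6) (by omega)
    rw [l3, ← mul_assoc, ← ih, mul_assoc _ (σ n 1), hc, hr, a1, a2]
    generalize asc n 1 (2 * (k + 1) + 1) = A at *
    generalize asc n 3 (2 * (k + 1) + 2) = B at *
    calc _ = B * σ n (2 * k + 5) * (σ n (2 * k + 6) * A) * σ n (2 * k + 4) * σ n (2 * k + 5)
          * σ n 1 := by simp only [mul_assoc]
      _ = B * (σ n (2 * k + 5) * A) * (σ n (2 * k + 6) * σ n (2 * k + 4)) * σ n (2 * k + 5)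
          * σ n 1 := by rw [← d2]; simp only [mul_assoc]
      _ = _ := by rw [← d1, ← d3]; simp only [mul_assoc]

theorem conj_prod {G : Type*} [Group G] (g : G) (l : List ℕ) (f h : ℕ → G)
    (H : ∀ t ∈ l, h t * g = g * f t) :
    (l.map h).prod * g = g * (l.map f).prod := by
  induction l with
  | nil => simp
  | cons a l ih =>
    rw [List.map_cons, List.map_cons, List.prod_cons, List.prod_cons, mul_assoc,
      ih (fun t ht => H t (List.mem_cons_of_mem _ ht)), ← mul_assoc, H a List.mem_cons_self,
      mul_assoc]

/-- Formula (∗), first equality: in `B_{2p+2}` with `p ≥ 5`,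
`(ρ_3ρ_5⋯ρ_{2p-7})(ρ_3ρ_5⋯ρ_{2p-9})⋯(ρ_3ρ_5)(ρ_3)
  = σ_1⁻¹ (∏_{i=4}^{p-1} (σ_3⋯σ_{2(p-i)+2})(σ_1⋯σ_{2(p-i)+1})) σ_1`,
where the left product is over `t = p-4, p-5, …, 1` (decreasing blocks) and the
right product is in increasing order of `i`. -/
theorem rho_check_formula (p : ℕ) (hp : 5 ≤ p) :
    ((List.range (p - 4)).map (fun s => rhoBlock (2 * p + 2) (p - 4 - s))).prod =
    (σ (2 * p + 2) 1)⁻¹ *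
      ((List.range (p - 4)).map (fun t =>
        asc (2 * p + 2) 3 (2 * (p - (4 + t)) + 2) *
        asc (2 * p + 2) 1 (2 * (p - (4 + t)) + 1))).prod *
      σ (2 * p + 2) 1 := by
  rw [mul_assoc, eq_inv_mul_iff_mul_eq]
  symm
  apply conj_prod
  intro t ht
  rw [List.mem_range] at ht
  obtain ⟨k, hk⟩ : ∃ k, p - 4 - t = k + 1 := ⟨p - 4 - t - 1, by omega⟩
  rw [show p - (4 + t) = k + 1 by omega, hk]
  exact key _ k
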